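/- Let T be a complete theory in a countable language. Then T has a model carrying a BP-rank if and only if T has a model carrying a BP_0-rank relative to some set of parameters. -/

import Mathlib

/-!
A BP-rank is a BP₀-rank relative to the whole model: monotonicity gives every definable set finite
degree (`exists_not_splits_of_monotonicity`), and among infinitely many disjoint pieces of rank at least
`n` in a set of rank `n + 1` some piece has rank exactly `n`.

Conversely, let `M` carry a BP₀-rank relative to `C`. Call a tuple isolated over `C` if there is a
smallest `C`-definable set containing it. Since rank is `C`-definable, a property of a member of a
family expressible through ranks holds either for all or for no indices in such a smallest set.
Hence at isolated indices the approximation properties are exact: the corresponding member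
of the family has finite degree (`IsIsolated.exists_not_splits`) and, if it has positive rank,
contains a definable subset of rank one less (`IsIsolated.exists_rk_pred`).

If all tuples of a set `N ⊇ C` are isolated over `C`, then `N`-definable sets have finite degree, so
each nonempty one contains a minimal one, obtained by minimizing first the rank and then the degree
(`IsAtomicOver.exists_atom`). Adjoining a point of a minimal set preserves isolation of all tuples.
A maximal such `N`, given by Zorn's lemma, therefore meets every nonempty `N`-definable set and is an
elementary substructure `S` of `M` by the Tarski–Vaught test
(`exists_atomic_elementarySubstructure`).

The rank of `M` restricts to `S` by giving a set definable in `S` the rank of the set that the same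
formula defines in `M`. Axioms 2, 3 and 4 pass to `S` because an `S`-definable set is determined by
its `S`-points, and Axiom 1 holds because all tuples of `S` are isolated over `C`.
-/

open FirstOrder FirstOrder.Language Set Cardinal

universe u v w

namespace BP

variable {L : FirstOrder.Language.{u, v}} {M : Type w} [L.Structure M]

/-- A rank function on a structure `M`: it assigns to every subset of a finite Cartesian
power of `M` a value in `WithBot ℕ`, where by convention the empty set gets `⊥ = -∞`,
and every nonempty parametrically definable set gets a natural number value. -/
structure RankFunction (L : FirstOrder.Language.{u, v}) (M : Type w) [L.Structure M] where
  rk : ∀ {n : ℕ}, Set (Fin n → M) → WithBot ℕ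
  rk_empty : ∀ n : ℕ, rk (∅ : Set (Fin n → M)) = ⊥
  rk_ne_bot : ∀ {n : ℕ} (A : Set (Fin n → M)),
    Set.Definable (Set.univ : Set M) L A → A.Nonempty → rk A ≠ ⊥

/-- The member `S_b = φ[M, b]` of the uniformly definable family given by the
parameter-free formula `φ(x, y)`, at the parameter tuple `b`. -/
def fiber {n m : ℕ} (φ : L.Formula (Fin n ⊕ Fin m)) (b : Fin m → M) : Set (Fin n → M) :=
  {x | φ.Realize (Sum.elim x b)}

namespace RankFunction

/-- Axiom 1.1 (weak monotonicity): `rk (A ∪ B) = max (rk A) (rk B)`. -/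
def Axiom1_1 (r : RankFunction L M) : Prop :=
  ∀ {n : ℕ} (A B : Set (Fin n → M)),
    Set.Definable (Set.univ : Set M) L A → Set.Definable (Set.univ : Set M) L B →
      r.rk (A ∪ B) = max (r.rk A) (r.rk B)

/-- Axiom 1.2 (finite degree): if `A` contains infinitely many pairwise disjoint nonempty
definable subsets each of rank at least `n`, then `rk A ≥ n + 1`. -/
def Axiom1_2 (r : RankFunction L M) : Prop :=
  ∀ {k : ℕ} (A : Set (Fin k → M)), Set.Definable (Set.univ : Set M) L A →
    ∀ n : ℕ,
      (∃ P : ℕ → Set (Fin k → M),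
          (∀ i, Set.Definable (Set.univ : Set M) L (P i)) ∧ (∀ i, (P i).Nonempty) ∧
          (∀ i, P i ⊆ A) ∧ (Pairwise fun i j => Disjoint (P i) (P j)) ∧
          ∀ i, (n : WithBot ℕ) ≤ r.rk (P i)) →
        ((n + 1 : ℕ) : WithBot ℕ) ≤ r.rk A

/-- Axiom 1 (monotonicity of rank): `rk A ≥ n + 1` iff `A` contains infinitely many pairwise
disjoint nonempty definable subsets each of rank at least `n`. -/
def Axiom1 (r : RankFunction L M) : Prop :=
  ∀ {k : ℕ} (A : Set (Fin k → M)), Set.Definable (Set.univ : Set M) L A →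
    ∀ n : ℕ,
      (((n + 1 : ℕ) : WithBot ℕ) ≤ r.rk A ↔
        ∃ P : ℕ → Set (Fin k → M),
          (∀ i, Set.Definable (Set.univ : Set M) L (P i)) ∧ (∀ i, (P i).Nonempty) ∧
          (∀ i, P i ⊆ A) ∧ (Pairwise fun i j => Disjoint (P i) (P j)) ∧
          ∀ i, (n : WithBot ℕ) ≤ r.rk (P i))

/-- Axiom 2 (definability of rank), relative to a parameter set `C`: for every uniformly
definable family `{S_b}` and every `k`, the set `{b | rk (S_b) = k}` is `C`-definable. -/
def Axiom2 (r : RankFunction L M) (C : Set M) : Prop :=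
  ∀ {n m : ℕ} (φ : L.Formula (Fin n ⊕ Fin m)) (k : ℕ),
    Set.Definable C L {b : Fin m → M | r.rk (fiber φ b) = (k : WithBot ℕ)}

/-- Axiom 3 (additivity of rank): if `f` is a definable function from `A` onto `B` all of whose
fibers have rank `n`, then `rk A = rk B + n`. -/
def Axiom3 (r : RankFunction L M) : Prop :=
  ∀ {k l : ℕ} (A : Set (Fin k → M)) (B : Set (Fin l → M))
    (f : (Fin k → M) → (Fin l → M)),
    Set.Definable (Set.univ : Set M) L A → Set.Definable (Set.univ : Set M) L B →
    Set.Definable (Set.univ : Set M) L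
      {z : (Fin k ⊕ Fin l) → M | z ∘ Sum.inl ∈ A ∧ f (z ∘ Sum.inl) = z ∘ Sum.inr} →
    Set.MapsTo f A B → Set.SurjOn f A B →
    ∀ n : ℕ, (∀ b ∈ B, r.rk (A ∩ f ⁻¹' {b}) = (n : WithBot ℕ)) →
      r.rk A = r.rk B + (n : WithBot ℕ)

/-- Axiom 4 (elimination of infinite quantifiers): for every uniformly definable family
`{S_b}` there is an integer `m₀` such that every `S_b` with at least `m₀` elements is
infinite (i.e. every finite `S_b` has fewer than `m₀` elements). -/
def Axiom4 (r : RankFunction L M) : Prop :=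
  ∀ {n m : ℕ} (φ : L.Formula (Fin n ⊕ Fin m)), ∃ m₀ : ℕ,
    ∀ (b : Fin m → M) (h : (fiber φ b).Finite), h.toFinset.card < m₀

/-- `A` can be partitioned into `d` pairwise disjoint nonempty definable subsets, each of
the same rank as `A`. -/
def IsRankPartition (r : RankFunction L M) {k : ℕ} (A : Set (Fin k → M)) (d : ℕ) : Prop :=
  ∃ P : Fin d → Set (Fin k → M),
    (∀ i, Set.Definable (Set.univ : Set M) L (P i)) ∧ (∀ i, (P i).Nonempty) ∧
    (∀ i, r.rk (P i) = r.rk A) ∧ (Pairwise fun i j => Disjoint (P i) (P j)) ∧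
    (⋃ i, P i) = A

/-- `A` has degree `d`: it can be partitioned into `d` pairwise disjoint nonempty definable
pieces of full rank, but not into more. -/
def HasDegree (r : RankFunction L M) {k : ℕ} (A : Set (Fin k → M)) (d : ℕ) : Prop :=
  r.IsRankPartition A d ∧ ∀ d' : ℕ, r.IsRankPartition A d' → d' ≤ d

/-- `A` has finite degree. -/
def HasFiniteDegree (r : RankFunction L M) {k : ℕ} (A : Set (Fin k → M)) : Prop :=
  ∃ d : ℕ, r.HasDegree A d

/-- The degree approximation property over `C`: in any uniformly definable family indexed by a
nonempty `C`-definable set, some member has finite degree. -/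
def DegreeApprox (r : RankFunction L M) (C : Set M) : Prop :=
  ∀ {n m : ℕ} (A : Set (Fin m → M)), Set.Definable C L A → A.Nonempty →
    ∀ φ : L.Formula (Fin n ⊕ Fin m), ∃ a₀ ∈ A, r.HasFiniteDegree (fiber φ a₀)

/-- The splitting approximation property over `C`: in any uniformly definable family of
infinite sets indexed by a nonempty `C`-definable set, some member `S_b` contains a definable
subset of rank `rk (S_b) - 1`. -/
def SplittingApprox (r : RankFunction L M) (C : Set M) : Prop :=
  ∀ {n m : ℕ} (B : Set (Fin m → M)), Set.Definable C L B → B.Nonempty →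
    ∀ φ : L.Formula (Fin n ⊕ Fin m), (∀ b ∈ B, (fiber φ b).Infinite) →
      ∃ b ∈ B, ∃ S' : Set (Fin n → M), Set.Definable (Set.univ : Set M) L S' ∧
        S' ⊆ fiber φ b ∧ r.rk S' + 1 = r.rk (fiber φ b)

/-- A `BP'`-rank (relative to `C`): Axioms 1.1, 1.2, 2 (over `C`), and 4. -/
def IsBP'Rank (r : RankFunction L M) (C : Set M) : Prop :=
  r.Axiom1_1 ∧ r.Axiom1_2 ∧ r.Axiom2 C ∧ r.Axiom4

/-- A `BP₀'`-rank relative to `C`: Axiom 1.1, the degree approximation property over `C`,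
Axiom 2 over `C`, and Axiom 4. -/
def IsBP0'Rank (r : RankFunction L M) (C : Set M) : Prop :=
  r.Axiom1_1 ∧ r.DegreeApprox C ∧ r.Axiom2 C ∧ r.Axiom4

/-- A `BP`-rank: Axioms 1, 2, 3, and 4. -/
def IsBPRank (r : RankFunction L M) : Prop :=
  r.Axiom1 ∧ r.Axiom2 Set.univ ∧ r.Axiom3 ∧ r.Axiom4

/-- A `BP₀`-rank relative to `C`: Axiom 1.1, degree approximation and splitting approximation
over `C`, Axiom 2 over `C`, Axiom 3, and Axiom 4. -/
def IsBP0Rank (r : RankFunction L M) (C : Set M) : Prop :=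
  r.Axiom1_1 ∧ r.DegreeApprox C ∧ r.SplittingApprox C ∧ r.Axiom2 C ∧ r.Axiom3 ∧ r.Axiom4

/-- Generic indistinguishability: `x₁ ~ x₂` for `R` on `S` iff the set of `x ∈ S` where
`R x₁ x` and `R x₂ x` disagree has rank strictly less than the rank of `S`. -/
def GenIndist (r : RankFunction L M) {k : ℕ} (S : Set (Fin k → M))
    (R : (Fin k → M) → (Fin k → M) → Prop) (x₁ x₂ : Fin k → M) : Prop :=
  r.rk {x | x ∈ S ∧ ¬(R x₁ x ↔ R x₂ x)} < r.rk S

/-- `A ≡ B`: the rank of the symmetric difference of `A` and `B` is strictly less than the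
rank of their union. -/
def RkEquiv (r : RankFunction L M) {k : ℕ} (A B : Set (Fin k → M)) : Prop :=
  r.rk (symmDiff A B) < r.rk (A ∪ B)

end RankFunction

open RankFunction

/-- The canonical extension relation: `S ⊆ N^k` gets rank `n` if `S` is a member, at a
parameter `b*` in the canonical extension of the index set, of a uniformly definable family
indexed by an `M`-definable set on whose `M`-points the rank is constantly `n`. -/
def CanonExtRank {N : Type w} [L.Structure N] (r : RankFunction L M) (_f : M ↪ₑ[L] N)
    {k : ℕ} (S : Set (Fin k → N)) (n : WithBot ℕ) : Prop :=
  ∃ (m l : ℕ) (φ : L.Formula (Fin k ⊕ Fin m)) (ψ : L.Formula (Fin m ⊕ Fin l))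
    (c : Fin l → M),
    (∀ b : Fin m → M, ψ.Realize (Sum.elim b c) → r.rk (fiber φ b) = n) ∧
    ∃ b' : Fin m → N, ψ.Realize (Sum.elim b' (_f ∘ c)) ∧ S = fiber φ b'

/-- `r'` is the canonical extension of `r` along the elementary embedding `f`. -/
def IsCanonExt {N : Type w} [L.Structure N] (r : RankFunction L M) (f : M ↪ₑ[L] N)
    (r' : RankFunction L N) : Prop :=
  ∀ {k : ℕ} (S : Set (Fin k → N)) (n : WithBot ℕ), CanonExtRank r f S n → r'.rk S = n

/-- A theory has the order property if some formula `φ(x̄; ȳ)` linearly orders pairs of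
sequences of tuples in some model. -/
def HasOrderProperty (L : FirstOrder.Language.{0, 0}) (T : L.Theory) : Prop :=
  ∃ (n m : ℕ) (φ : L.Formula (Fin n ⊕ Fin m)) (N : Theory.ModelType.{0, 0, 0} T)
    (a : ℕ → Fin n → N) (b : ℕ → Fin m → N),
    ∀ i j : ℕ, (φ.Realize (Sum.elim (a i) (b j)) ↔ i < j)

/-- A theory is stable if no formula has the order property. -/
def IsStableTheory (L : FirstOrder.Language.{0, 0}) (T : L.Theory) : Prop :=
  ¬ HasOrderProperty L T

/-- A theory is superstable if it is stable in every cardinal `κ ≥ 2 ^ ℵ₀`: over every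
parameter set of size at most `κ` in a model, there are at most `κ` complete 1-types. -/
def IsSuperstableTheory (L : FirstOrder.Language.{0, 0}) (T : L.Theory) : Prop :=
  ∀ κ : Cardinal.{0}, 2 ^ Cardinal.aleph0 ≤ κ →
    ∀ (N : Theory.ModelType.{0, 0, 0} T) (A : Set N), #A ≤ κ →
      #(((L[[A]]).completeTheory N).CompleteType (Fin 1)) ≤ κ

/-! ### Definable sets and parameters -/

section Definability

variable {α β : Type*} {A : Set M}

/-- Every `A`-definable set is a member, at a tuple from `A`, of a family given by a
parameter-free formula. -/
theorem exists_family {s : Set (α → M)} (h : A.Definable L s) :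
    ∃ (m : ℕ) (φ : L.Formula (α ⊕ Fin m)) (b : Fin m → M),
      (∀ i, b i ∈ A) ∧ s = {x | φ.Realize (Sum.elim x b)} := by
  obtain ⟨A0, hA0, h⟩ := definable_iff_finitely_definable.1 h
  obtain ⟨φ, rfl⟩ := definable_iff_exists_formula_sum.1 h
  let e := A0.equivFin
  refine ⟨A0.card, φ.relabel (Sum.elim (fun a => Sum.inr (e a)) Sum.inl),
    fun i => (e.symm i : M), fun i => hA0 (e.symm i).2, ?_⟩
  ext x
  simp only [mem_ofPred_eq, Formula.realize_relabel]
  apply iff_of_eq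
  congr 1
  funext i
  rcases i with i | i
  · simp [e]
  · rfl

theorem definable_formula (φ : L.Formula α) : A.Definable L {x : α → M | φ.Realize x} :=
  (empty_definable_iff.2 ⟨φ, rfl⟩).mono (empty_subset _)

theorem definable_coord_eq {a : M} (ha : a ∈ A) (i : α) :
    A.Definable L {x : α → M | x i = a} := by
  have h : A.Definable L {x : Fin 1 → M | x 0 ∈ ({a} : Set M)} := Definable.singleton_of_mem L ha
  exact h.preimage_comp (fun _ : Fin 1 => i)

theorem definable_singleton [Finite α] {a : α → M} (ha : ∀ i, a i ∈ A) :
    A.Definable L ({a} : Set (α → M)) := by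
  have h := definable_iInter_of_finite (fun i => definable_coord_eq (L := L) (ha i) i)
  convert h using 1
  ext x
  simp [funext_iff]

/-- Substituting parameters from `A` for some coordinates keeps a set `A`-definable. -/
theorem definable_slice [Finite β] {W : Set (α ⊕ β → M)} (hW : A.Definable L W) {b : β → M}
    (hb : ∀ i, b i ∈ A) : A.Definable L {x : α → M | Sum.elim x b ∈ W} := by
  have h := (hW.inter ((definable_singleton (L := L) hb).preimage_comp
    (Sum.inr : β → α ⊕ β))).exists_of_finite
  convert h using 1
  ext x
  simp only [mem_ofPred_eq, mem_inter_iff, mem_preimage, mem_singleton_iff]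
  constructor
  · intro hx
    exact ⟨b, hx, rfl⟩
  · rintro ⟨u, hx, rfl⟩
    exact hx

theorem definable_fiber {n m : ℕ} (φ : L.Formula (Fin n ⊕ Fin m)) {b : Fin m → M}
    (hb : ∀ i, b i ∈ A) : A.Definable L (fiber φ b) :=
  definable_slice (definable_formula φ) hb

end Definability

/-! ### Splitting a set into pieces of a given rank -/

section Rank

variable {r : RankFunction L M} {C : Set M}

/-- `Splits r k d A`: one can successively cut off `d` pieces of rank `k` from `A` by definable
sets, so that `A` contains `d` disjoint definable subsets of rank `k`. The recursive form makes
the condition on the parameters of `A` definable one existential quantifier at a time; for `A`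
of rank `k`, finite degree means that `Splits r k d A` fails for some `d`. -/
def Splits (r : RankFunction L M) {n : ℕ} (k : ℕ) : ℕ → Set (Fin n → M) → Prop
  | 0, _ => True
  | d + 1, A => ∃ P : Set (Fin n → M), (univ : Set M).Definable L P ∧
      r.rk (A ∩ P) = (k : WithBot ℕ) ∧ Splits r k d (A \ P)

theorem exists_rk_eq {n : ℕ} {A : Set (Fin n → M)} (hA : (univ : Set M).Definable L A)
    (hne : A.Nonempty) : ∃ k : ℕ, r.rk A = (k : WithBot ℕ) := by
  obtain ⟨k, hk⟩ := WithBot.ne_bot_iff_exists.1 (r.rk_ne_bot A hA hne)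
  exact ⟨k, hk.symm⟩

theorem nonempty_of_le_rk {n : ℕ} {A : Set (Fin n → M)} {k : ℕ}
    (h : (k : WithBot ℕ) ≤ r.rk A) : A.Nonempty := by
  rw [nonempty_iff_ne_empty]
  rintro rfl
  rw [r.rk_empty] at h
  simp at h

theorem rk_mono (h11 : r.Axiom1_1) {n : ℕ} {A B : Set (Fin n → M)}
    (hA : (univ : Set M).Definable L A) (hB : (univ : Set M).Definable L B) (hAB : A ⊆ B) :
    r.rk A ≤ r.rk B := by
  have h := h11 A B hA hB
  rw [union_eq_self_of_subset_left hAB] at h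
  rw [h]
  exact le_max_left _ _

theorem Splits.isRankPartition (h11 : r.Axiom1_1) {n k : ℕ} : ∀ (d : ℕ) (A : Set (Fin n → M)),
    (univ : Set M).Definable L A → r.rk A = (k : WithBot ℕ) → Splits r k (d + 1) A →
      r.IsRankPartition A (d + 1) := by
  intro d
  induction d with
  | zero =>
    intro A hA hk _
    exact ⟨fun _ => A, fun _ => hA, fun _ => nonempty_of_le_rk hk.ge, fun _ => rfl,
      fun i j hij => (hij (Subsingleton.elim (α := Fin 1) i j)).elim, iUnion_const A⟩
  | succ d ih =>
    rintro A hA hk ⟨P, hP, hPk, hs⟩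
    have hd : (univ : Set M).Definable L (A \ P) := hA.sdiff hP
    have hdk : r.rk (A \ P) = (k : WithBot ℕ) := by
      apply le_antisymm
      · exact (rk_mono h11 hd hA sdiff_subset).trans hk.le
      · obtain ⟨Q, hQ, hQk, -⟩ := hs
        exact hQk.ge.trans (rk_mono h11 (hd.inter hQ) hd inter_subset_left)
    obtain ⟨F, hF, hFne, hFk, hFd, hFU⟩ := ih _ hd hdk hs
    have hFs : ∀ i, F i ⊆ A \ P := fun i => hFU ▸ subset_iUnion F i
    have hdisj : ∀ i, Disjoint (A ∩ P) (F i) := fun i =>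
      disjoint_left.2 fun x hx hx' => (hFs i hx').2 hx.2
    refine ⟨Fin.cons (A ∩ P) F, ?_, ?_, ?_, ?_, ?_⟩
    · intro i; cases i using Fin.cases with
      | zero => exact hA.inter hP
      | succ i => exact hF i
    · intro i; cases i using Fin.cases with
      | zero => exact nonempty_of_le_rk hPk.ge
      | succ i => exact hFne i
    · intro i; cases i using Fin.cases with
      | zero => exact hPk.trans hk.symm
      | succ i => exact ((hFk i).trans hdk).trans hk.symm
    · intro i j hij
      cases i using Fin.cases with
      | zero =>
        cases j using Fin.cases with
        | zero => exact (hij rfl).elim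
        | succ j => exact hdisj j
      | succ i =>
        cases j using Fin.cases with
        | zero => exact (hdisj i).symm
        | succ j => exact hFd fun h => hij (congrArg Fin.succ h)
    · ext x
      rw [mem_iUnion, Fin.exists_fin_succ]
      simp only [Fin.cons_zero, Fin.cons_succ]
      rw [← mem_iUnion, hFU]
      by_cases hx : x ∈ P <;> simp [hx]

theorem splits_of_disjoint {n k : ℕ} (d : ℕ) : ∀ (A : Set (Fin n → M))
    (P : Fin d → Set (Fin n → M)), (∀ i, (univ : Set M).Definable L (P i)) → (∀ i, P i ⊆ A) →
      (Pairwise fun i j => Disjoint (P i) (P j)) → (∀ i, r.rk (P i) = (k : WithBot ℕ)) →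
      Splits r k d A := by
  induction d with
  | zero => intros; trivial
  | succ d ih =>
    intro A P hP hPA hPd hPk
    refine ⟨P 0, hP 0, ?_, ih _ (fun i => P i.succ) (fun i => hP _) (fun i x hx => ⟨hPA _ hx, ?_⟩)
      (fun i j hij => hPd (by simpa using hij)) (fun i => hPk _)⟩
    · rw [inter_eq_self_of_subset_right (hPA 0)]
      exact hPk 0
    · exact disjoint_left.1 (hPd (Fin.succ_ne_zero i)) hx

/-- Axiom 2 for families of slices of an `A`-definable set, where `A` contains the parameter
set `C` of Axiom 2. -/
theorem definable_rk_eq (h2 : r.Axiom2 C) {A : Set M} (hCA : C ⊆ A) {β : Type*} [Finite β]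
    {n : ℕ} {D : Set (Fin n ⊕ β → M)} (hD : A.Definable L D) (k : ℕ) :
    A.Definable L {b : β → M | r.rk {x : Fin n → M | Sum.elim x b ∈ D} = (k : WithBot ℕ)} := by
  obtain ⟨p, φ, e, he, rfl⟩ := exists_family hD
  obtain ⟨m, ⟨g⟩⟩ := Finite.exists_equiv_fin (β ⊕ Fin p)
  let ψ : L.Formula (Fin n ⊕ Fin m) := φ.relabel
    (Sum.elim (Sum.elim Sum.inl (fun b => Sum.inr (g (Sum.inl b))))
      (fun i => Sum.inr (g (Sum.inr i))))
  have h := definable_slice (((h2 ψ k).mono hCA).preimage_comp g.symm) he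
  convert h using 1
  ext b
  simp only [mem_ofPred_eq, mem_preimage]
  apply iff_of_eq
  congr 2
  ext x
  simp only [fiber, ψ, mem_ofPred_eq, Formula.realize_relabel]
  apply iff_of_eq
  congr 1
  funext i
  rcases i with (i | i) | i <;> simp

/-- Splitting of a member of a `C`-definable family is witnessed on a `C`-definable set of
indices: the parameters of the cutting sets are quantified out using definability of rank. -/
theorem Splits.exists_definable (h2 : r.Axiom2 C) {n k : ℕ} : ∀ (d : ℕ) (β : Type) [Finite β]
    (D : Set (Fin n ⊕ β → M)), C.Definable L D → ∀ a : β → M,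
      Splits r k d {x | Sum.elim x a ∈ D} →
      ∃ W : Set (β → M), C.Definable L W ∧ a ∈ W ∧
        ∀ a' ∈ W, Splits r k d {x | Sum.elim x a' ∈ D} := by
  intro d
  induction d with
  | zero => exact fun β _ D hD a _ => ⟨univ, definable_univ, mem_univ _, fun _ _ => trivial⟩
  | succ d ih =>
    rintro β _ D hD a ⟨P, hP, hPk, hs⟩
    obtain ⟨p, φ, e, -, rfl⟩ := exists_family hP
    have hD' : C.Definable L {z : Fin n ⊕ (β ⊕ Fin p) → M |
        Sum.elim (z ∘ Sum.inl) (z ∘ Sum.inr ∘ Sum.inl) ∈ D} := by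
      convert hD.preimage_comp (Sum.elim Sum.inl (Sum.inr ∘ Sum.inl) :
        Fin n ⊕ β → Fin n ⊕ (β ⊕ Fin p)) using 1
      ext z
      simp [Sum.comp_elim]
    have hE : C.Definable L {z : Fin n ⊕ (β ⊕ Fin p) → M |
        φ.Realize (Sum.elim (z ∘ Sum.inl) (z ∘ Sum.inr ∘ Sum.inr))} := by
      convert (definable_formula φ).preimage_comp (Sum.elim Sum.inl (Sum.inr ∘ Sum.inr) :
        Fin n ⊕ Fin p → Fin n ⊕ (β ⊕ Fin p)) using 1
      ext z
      simp [Sum.comp_elim]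
    obtain ⟨W, hW, haW, hWs⟩ := ih (β ⊕ Fin p) _ (hD'.sdiff hE) (Sum.elim a e) hs
    refine ⟨_, (hW.inter (definable_rk_eq h2 subset_rfl (hD'.inter hE) k)).exists_of_finite,
      ⟨e, haW, hPk⟩, ?_⟩
    rintro a' ⟨e', haW', hPk'⟩
    exact ⟨_, definable_slice (definable_formula φ) (b := e') (fun _ => mem_univ _), hPk',
      hWs _ haW'⟩

/-- Additivity for the identity map of a singleton reads `k = k + k`. -/
theorem rk_singleton (h3 : r.Axiom3) {n : ℕ} (a : Fin n → M) : r.rk {a} = ((0 : ℕ) : WithBot ℕ) := by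
  have hd : (univ : Set M).Definable L ({a} : Set (Fin n → M)) :=
    definable_singleton fun _ => mem_univ _
  obtain ⟨k, hk⟩ := exists_rk_eq (r := r) hd (singleton_nonempty a)
  have h := h3 {a} {a} id hd hd ?_ (mapsTo_id _) (surjOn_id _) k ?_
  · rw [hk] at h ⊢
    norm_cast at h ⊢
    omega
  · convert definable_singleton (L := L) (A := (univ : Set M)) (a := Sum.elim a a)
      (fun _ => mem_univ _) using 1
    ext z
    simp only [mem_ofPred_eq, mem_singleton_iff, id]
    constructor
    · rintro ⟨h1, h2⟩
      rw [← Sum.elim_comp_inl_inr z, ← h2, h1]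
    · rintro rfl
      simp
  · rintro b rfl
    simpa using hk

theorem rk_le_zero_of_finite (h11 : r.Axiom1_1) (h3 : r.Axiom3) {n : ℕ} {A : Set (Fin n → M)}
    (hA : A.Finite) : (univ : Set M).Definable L A ∧ r.rk A ≤ ((0 : ℕ) : WithBot ℕ) := by
  induction A, hA using Set.Finite.induction_on with
  | empty => exact ⟨definable_empty, by rw [r.rk_empty]; exact bot_le⟩
  | @insert a s _ _ ih =>
    have hd : (univ : Set M).Definable L ({a} : Set (Fin n → M)) :=
      definable_singleton fun _ => mem_univ _
    rw [insert_eq]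
    exact ⟨hd.union ih.1, by rw [h11 _ _ hd ih.1, rk_singleton h3]; exact max_le le_rfl ih.2⟩

end Rank

/-! ### Isolated tuples -/

section Isolated

variable {r : RankFunction L M} {C : Set M}

/-- The type of `a` over `C` is isolated: among the `C`-definable sets containing `a` there is a
smallest one. -/
def IsIsolated (L : FirstOrder.Language.{u, v}) {M : Type w} [L.Structure M] (C : Set M)
    {α : Type*} (a : α → M) : Prop :=
  ∃ θ : Set (α → M), C.Definable L θ ∧ a ∈ θ ∧
    ∀ A : Set (α → M), C.Definable L A → a ∈ A → θ ⊆ A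

/-- Every finite tuple from `N` has an isolated type over `C`. -/
def IsAtomicOver (L : FirstOrder.Language.{u, v}) {M : Type w} [L.Structure M] (C N : Set M) :
    Prop :=
  ∀ (m : ℕ) (a : Fin m → M), (∀ i, a i ∈ N) → IsIsolated L C a

theorem IsIsolated.comp {α β : Type*} [Finite α] [Finite β] {a : α → M}
    (ha : IsIsolated L C a) (g : β → α) : IsIsolated L C (a ∘ g) := by
  obtain ⟨θ, hθ, haθ, hmin⟩ := ha
  refine ⟨_, hθ.image_comp g, ⟨a, haθ, rfl⟩, fun A hA haA => ?_⟩
  rintro _ ⟨b, hb, rfl⟩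
  exact hmin _ (hA.preimage_comp g) haA hb

theorem IsAtomicOver.isIsolated {N : Set M} (hN : IsAtomicOver L C N) {α : Type*} [Finite α]
    {a : α → M} (ha : ∀ i, a i ∈ N) : IsIsolated L C a := by
  obtain ⟨m, ⟨g⟩⟩ := Finite.exists_equiv_fin α
  have h := (hN m (a ∘ g.symm) fun i => ha _).comp g
  rwa [Function.comp_assoc, Equiv.symm_comp_self, Function.comp_id] at h

/-- Transitivity of isolation: if `s` is isolated over `C`, and among the slices at `s` of
`C`-definable sets there is a smallest one, `D`, containing `x`, then `(s, x)` is isolated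
over `C`. -/
theorem IsIsolated.sumElim {α β : Type*} [Finite α] [Finite β] {s : α → M} {x : β → M}
    (hs : IsIsolated L C s) {D : Set (α ⊕ β → M)} (hD : C.Definable L D) (hx : Sum.elim s x ∈ D)
    (hmin : ∀ D' : Set (α ⊕ β → M), C.Definable L D' → Sum.elim s x ∈ D' →
      ∀ y : β → M, Sum.elim s y ∈ D → Sum.elim s y ∈ D') :
    IsIsolated L C (Sum.elim s x) := by
  obtain ⟨θ, hθ, hsθ, hθmin⟩ := hs
  refine ⟨_, (hθ.preimage_comp Sum.inl).inter hD, ⟨by simpa using hsθ, hx⟩, ?_⟩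
  rintro D' hD' hxD' z ⟨hz1, hz2⟩
  have h := hθmin _ (hD.compl.union hD').forall_of_finite (fun y => ?_) hz1 (z ∘ Sum.inr)
  · rw [Sum.elim_comp_inl_inr] at h
    exact h.resolve_left fun h => h hz2
  · by_cases hy : Sum.elim s y ∈ D
    · exact Or.inr (hmin D' hD' hxD' y hy)
    · exact Or.inl hy

/-- At isolated parameters the degree approximation property is exact: a splitting at `a` would
spread to the smallest `C`-definable set around `a`, which has a member of finite degree. -/
theorem IsIsolated.exists_not_splits (h11 : r.Axiom1_1) (hdeg : r.DegreeApprox C)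
    (h2 : r.Axiom2 C) {n m k : ℕ} {a : Fin m → M} (ha : IsIsolated L C a)
    (φ : L.Formula (Fin n ⊕ Fin m)) (hk : r.rk (fiber φ a) = (k : WithBot ℕ)) :
    ∃ d, ¬ Splits r k d (fiber φ a) := by
  obtain ⟨θ, hθ, haθ, hmin⟩ := ha
  obtain ⟨a₀, ha₀, d, -, hd⟩ := hdeg θ hθ ⟨a, haθ⟩ φ
  refine ⟨d + 1, fun hs => ?_⟩
  obtain ⟨W, hW, haW, hWs⟩ := Splits.exists_definable h2 (d + 1) (Fin m) _ (definable_formula φ) a hs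
  have h₀ := hWs a₀ (hmin W hW haW ha₀)
  have hk₀ : r.rk (fiber φ a₀) = (k : WithBot ℕ) := hmin _ (h2 φ k) hk ha₀
  have := hd _ (h₀.isRankPartition h11 d _ (definable_fiber φ fun _ => mem_univ _) hk₀)
  omega

/-- At isolated parameters the splitting approximation property is exact. -/
theorem IsIsolated.exists_rk_pred (h11 : r.Axiom1_1) (hspl : r.SplittingApprox C)
    (h2 : r.Axiom2 C) (h3 : r.Axiom3) {n m k : ℕ} {a : Fin m → M} (ha : IsIsolated L C a)
    (φ : L.Formula (Fin n ⊕ Fin m)) (hk : r.rk (fiber φ a) = ((k + 1 : ℕ) : WithBot ℕ)) :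
    ∃ (p : ℕ) (ψ : L.Formula (Fin n ⊕ Fin p)) (e : Fin p → M),
      r.rk (fiber φ a ∩ fiber ψ e) = (k : WithBot ℕ) := by
  obtain ⟨θ, hθ, haθ, hmin⟩ := ha
  have hθk : ∀ b ∈ θ, r.rk (fiber φ b) = ((k + 1 : ℕ) : WithBot ℕ) :=
    fun b hb => hmin _ (h2 φ (k + 1)) hk hb
  obtain ⟨b, hb, S, hS, hSb, hrk⟩ := hspl θ hθ ⟨a, haθ⟩ φ (fun b hb hfin => by
    have h := (rk_le_zero_of_finite (r := r) h11 h3 hfin).2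
    rw [hθk b hb] at h
    norm_cast at h)
  obtain ⟨p, ψ, e, -, rfl⟩ := exists_family hS
  rw [hθk b hb] at hrk
  have hrk' : r.rk (fiber ψ e) = (k : WithBot ℕ) := by
    change r.rk (fiber ψ e) + 1 = _ at hrk
    generalize r.rk (fiber ψ e) = q at hrk
    cases q with
    | bot => exact absurd hrk (WithBot.bot_ne_coe (a := k + 1))
    | coe q => exact congrArg WithBot.some (Nat.succ_injective (WithBot.coe_injective hrk))
  have hD : C.Definable L {z : Fin n ⊕ (Fin m ⊕ Fin p) → M |
      φ.Realize (Sum.elim (z ∘ Sum.inl) (z ∘ Sum.inr ∘ Sum.inl))} := by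
    convert (definable_formula φ).preimage_comp (Sum.elim Sum.inl (Sum.inr ∘ Sum.inl) :
      Fin n ⊕ Fin m → Fin n ⊕ (Fin m ⊕ Fin p)) using 1
    ext z
    simp [Sum.comp_elim]
  have hE : C.Definable L {z : Fin n ⊕ (Fin m ⊕ Fin p) → M |
      ψ.Realize (Sum.elim (z ∘ Sum.inl) (z ∘ Sum.inr ∘ Sum.inr))} := by
    convert (definable_formula ψ).preimage_comp (Sum.elim Sum.inl (Sum.inr ∘ Sum.inr) :
      Fin n ⊕ Fin p → Fin n ⊕ (Fin m ⊕ Fin p)) using 1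
    ext z
    simp [Sum.comp_elim]
  have hW := (definable_rk_eq h2 subset_rfl (hD.inter hE) k).exists_of_finite
  by_contra hcon
  -- The indices of members with a subset of rank `k` defined by `ψ` form a `C`-definable set
  -- containing `b`; as `b ∈ θ`, isolation forces it to contain `a`.
  refine hmin _ hW.compl (fun ⟨e', he'⟩ => hcon ⟨p, ψ, e', he'⟩) hb ⟨e, ?_⟩
  rw [← inter_eq_self_of_subset_right (show fiber ψ e ⊆ fiber φ b from hSb)] at hrk'
  exact hrk'

end Isolated

/-! ### Atomic elementary substructures -/

section Atomic

variable {r : RankFunction L M} {C N : Set M}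

theorem IsAtomicOver.exists_not_splits (h11 : r.Axiom1_1) (hdeg : r.DegreeApprox C)
    (h2 : r.Axiom2 C) (hN : IsAtomicOver L C N) {n k : ℕ} {Y : Set (Fin n → M)}
    (hY : N.Definable L Y) (hk : r.rk Y = (k : WithBot ℕ)) : ∃ d, ¬ Splits r k d Y := by
  obtain ⟨m, φ, a, ha, rfl⟩ := exists_family hY
  exact (hN m a ha).exists_not_splits h11 hdeg h2 φ hk

/-- Every nonempty `N`-definable set contains a minimal nonempty one: take a subset of least rank
and then of least degree. -/
theorem IsAtomicOver.exists_atom (h11 : r.Axiom1_1) (hdeg : r.DegreeApprox C)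
    (h2 : r.Axiom2 C) (hN : IsAtomicOver L C N) {n : ℕ} {X : Set (Fin n → M)}
    (hX : N.Definable L X) (hne : X.Nonempty) :
    ∃ Y ⊆ X, N.Definable L Y ∧ Y.Nonempty ∧
      ∀ Z, N.Definable L Z → (Y ∩ Z).Nonempty → Y ⊆ Z := by
  classical
  have huniv : ∀ {Y : Set (Fin n → M)}, N.Definable L Y → (univ : Set M).Definable L Y :=
    fun h => h.mono (subset_univ _)
  have hex : ∃ k : ℕ, ∃ Y ⊆ X, N.Definable L Y ∧ r.rk Y = (k : WithBot ℕ) := by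
    obtain ⟨k, hk⟩ := exists_rk_eq (r := r) (huniv hX) hne
    exact ⟨k, X, subset_rfl, hX, hk⟩
  set k := Nat.find hex with hkdef
  have hkmin : ∀ Y ⊆ X, N.Definable L Y → Y.Nonempty → (k : WithBot ℕ) ≤ r.rk Y := by
    intro Y hYX hY hYne
    obtain ⟨k', hk'⟩ := exists_rk_eq (r := r) (huniv hY) hYne
    rw [hk']
    exact_mod_cast Nat.find_min' hex ⟨Y, hYX, hY, hk'⟩
  have hex' : ∃ d : ℕ, ∃ Y ⊆ X, N.Definable L Y ∧ r.rk Y = (k : WithBot ℕ) ∧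
      ¬ Splits r k d Y := by
    obtain ⟨Y, hYX, hY, hYk⟩ := Nat.find_spec hex
    obtain ⟨d, hd⟩ := hN.exists_not_splits h11 hdeg h2 hY hYk
    exact ⟨d, Y, hYX, hY, hYk, hd⟩
  obtain ⟨Y, hYX, hY, hYk, hYd⟩ := Nat.find_spec hex'
  have hdmin := fun d' => Nat.find_min hex' (m := d')
  generalize Nat.find hex' = d at hYd hdmin
  refine ⟨Y, hYX, hY, nonempty_of_le_rk hYk.ge, fun Z hZ hYZ => ?_⟩
  by_contra hnot
  have hne' : (Y \ Z).Nonempty := sdiff_nonempty.2 hnot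
  have hrk : ∀ Y' ⊆ Y, N.Definable L Y' → Y'.Nonempty → r.rk Y' = (k : WithBot ℕ) :=
    fun Y' h h' h'' => le_antisymm ((rk_mono h11 (huniv h') (huniv hY) h).trans hYk.le)
      (hkmin Y' (h.trans hYX) h' h'')
  cases d with
  | zero => exact hYd trivial
  | succ d =>
    refine hdmin d (Nat.lt_succ_self d) ⟨Y \ Z, sdiff_subset.trans hYX, hY.sdiff hZ,
      hrk _ sdiff_subset (hY.sdiff hZ) hne', fun hs => hYd ?_⟩
    exact ⟨Z, huniv hZ, hrk _ inter_subset_left (hY.inter hZ) hYZ, hs⟩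

/-- Adjoining an element of a minimal `N`-definable set keeps `N` atomic over `C`. -/
theorem IsAtomicOver.insert (hCN : C ⊆ N) (hN : IsAtomicOver L C N) {Y : Set (Fin 1 → M)}
    (hY : N.Definable L Y) (hmin : ∀ Z, N.Definable L Z → (Y ∩ Z).Nonempty → Y ⊆ Z)
    {x : Fin 1 → M} (hx : x ∈ Y) : IsAtomicOver L C (insert (x 0) N) := by
  classical
  intro m t ht
  obtain ⟨p, ψ, b, hb, rfl⟩ := exists_family hY
  let s : {i // t i ∈ N} ⊕ Fin p → M := Sum.elim (fun i => t i) b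
  have hsN : ∀ i, s i ∈ N := by
    rintro (i | i)
    · exact i.2
    · exact hb i
  have hD : C.Definable L {z : ({i // t i ∈ N} ⊕ Fin p) ⊕ Fin 1 → M |
      ψ.Realize (Sum.elim (z ∘ Sum.inr) (z ∘ Sum.inl ∘ Sum.inr))} := by
    convert (definable_formula ψ).preimage_comp (Sum.elim Sum.inr (Sum.inl ∘ Sum.inr) :
      Fin 1 ⊕ Fin p → ({i // t i ∈ N} ⊕ Fin p) ⊕ Fin 1) using 1
    ext z
    simp [Sum.comp_elim]
  have hiso : IsIsolated L C (Sum.elim s x) := by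
    refine (hN.isIsolated hsN).sumElim hD hx ?_
    intro D' hD' hxD' y hy
    have hsl : N.Definable L {y : Fin 1 → M | Sum.elim s y ∈ D'} := by
      convert definable_slice ((hD'.mono hCN).preimage_comp Sum.swap) hsN using 1
      ext y
      simp only [mem_ofPred_eq, mem_preimage]
      apply iff_of_eq
      congr 1
      funext i
      rcases i with i | i <;> rfl
    exact hmin _ hsl ⟨x, hx, hxD'⟩ hy
  have h := hiso.comp (fun i : Fin m =>
    if h : t i ∈ N then (Sum.inl (Sum.inl ⟨i, h⟩) : ({i // t i ∈ N} ⊕ Fin p) ⊕ Fin 1)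
    else Sum.inr 0)
  convert h using 1
  funext i
  by_cases h : t i ∈ N
  · simp [h, s]
  · simpa [h] using (ht i).resolve_right h

/-- A maximal subset containing `C` and atomic over `C` meets every nonempty set definable over
it, so it is an elementary substructure by the Tarski–Vaught test. -/
theorem exists_atomic_elementarySubstructure (h11 : r.Axiom1_1) (hdeg : r.DegreeApprox C)
    (h2 : r.Axiom2 C) :
    ∃ S : L.ElementarySubstructure M, C ⊆ (S : Set M) ∧ IsAtomicOver L C (S : Set M) := by
  have hC : IsAtomicOver L C C := fun m a ha =>
    ⟨{a}, definable_singleton ha, rfl, fun A _ haA => singleton_subset_iff.2 haA⟩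
  obtain ⟨N, hCN, hN, hmax⟩ := zorn_subset_nonempty {N : Set M | IsAtomicOver L C N} (by
    intro c hc hchain hne
    refine ⟨⋃₀ c, fun m a ha => ?_, fun s hs => subset_sUnion_of_mem hs⟩
    obtain ⟨s, hs, has⟩ := hchain.directedOn.exists_mem_subset_of_finite_of_subset_sUnion hne
      (finite_range a) (range_subset_iff.2 ha)
    exact hc hs m a fun i => has (mem_range_self i)) C hC
  have hmeet : L.MeetsDefinable N := by
    rintro D ⟨x, hx⟩ hD
    obtain ⟨Y, hYD, hY, ⟨y, hy⟩, hmin⟩ := IsAtomicOver.exists_atom h11 hdeg h2 hN hD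
      ⟨fun _ => x, hx⟩
    exact ⟨y 0, hYD hy, hmax (IsAtomicOver.insert hCN hN hY hmin hy) (subset_insert _ _)
      (mem_insert _ _)⟩
  have hS : (hmeet.toElementarySubstructure : Set M) = N := hmeet.closure_eq_self
  exact ⟨hmeet.toElementarySubstructure, hS.symm ▸ hCN, hS.symm ▸ hN⟩

end Atomic

/-! ### Monotonicity of rank -/

section AxiomOne

variable {r : RankFunction L M}

/-- If every set with property `Q` has a subset with property `R` whose removal preserves `Q`,
then a set with property `Q` has infinitely many disjoint subsets with property `R`. -/
theorem exists_disjoint_sequence {X : Type*} (Q R : Set X → Prop)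
    (step : ∀ A, Q A → ∃ P ⊆ A, R P ∧ Q (A \ P)) {A : Set X} (hA : Q A) :
    ∃ P : ℕ → Set X, (∀ i, R (P i)) ∧ (∀ i, P i ⊆ A) ∧
      Pairwise fun i j => Disjoint (P i) (P j) := by
  choose! F hFA hFR hFQ using step
  let B : ℕ → Set X := fun i => Nat.rec A (fun _ B => B \ F B) i
  have hB : ∀ i, B (i + 1) = B i \ F (B i) := fun i => rfl
  have hQ : ∀ i, Q (B i) := by
    intro i
    induction i with
    | zero => exact hA
    | succ i ih => exact hFQ _ ih
  have hanti : Antitone B := antitone_nat_of_succ_le fun i => sdiff_subset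
  refine ⟨fun i => F (B i), fun i => hFR _ (hQ i),
    fun i => (hFA _ (hQ i)).trans (hanti (Nat.zero_le i)), ?_⟩
  have hlt : ∀ i j, i < j → Disjoint (F (B i)) (F (B j)) := by
    intro i j hij
    have h : F (B j) ⊆ B i \ F (B i) := (hFA _ (hQ j)).trans (hanti (Nat.succ_le_of_lt hij))
    exact disjoint_left.2 fun x hx hx' => (h hx').2 hx
  intro i j hij
  rcases lt_or_gt_of_ne hij with h | h
  · exact hlt i j h
  · exact (hlt j i h).symm

theorem rk_le_of_forall {n : ℕ} {A B : Set (Fin n → M)}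
    (h : ∀ k : ℕ, (k : WithBot ℕ) ≤ r.rk A → (k : WithBot ℕ) ≤ r.rk B) : r.rk A ≤ r.rk B := by
  by_cases hA : r.rk A = ⊥
  · rw [hA]; exact bot_le
  · obtain ⟨k, hk⟩ := WithBot.ne_bot_iff_exists.1 hA
    rw [← hk]
    exact h k hk.le

theorem zero_le_rk {n : ℕ} {A : Set (Fin n → M)} (hA : (univ : Set M).Definable L A)
    (hne : A.Nonempty) : ((0 : ℕ) : WithBot ℕ) ≤ r.rk A := by
  obtain ⟨k, hk⟩ := exists_rk_eq (r := r) hA hne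
  rw [hk]
  exact_mod_cast Nat.zero_le k

theorem eq_of_le_of_not_succ_le {q : WithBot ℕ} {k : ℕ} (h : (k : WithBot ℕ) ≤ q)
    (h' : ¬ ((k + 1 : ℕ) : WithBot ℕ) ≤ q) : q = (k : WithBot ℕ) := by
  cases q with
  | bot => simp at h
  | coe q =>
    have h1 : k ≤ q := WithBot.coe_le_coe.1 h
    have h2 : ¬ k + 1 ≤ q := fun hh => h' (WithBot.coe_le_coe.2 hh)
    exact congrArg WithBot.some (by omega : q = k)

/-- Monotonicity follows from weak monotonicity when all definable sets have finite degree and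
every definable set of positive rank has a definable subset of rank one less. -/
theorem monotonicity_of_not_splits (h11 : r.Axiom1_1)
    (hdeg : ∀ {n k : ℕ} (A : Set (Fin n → M)), (univ : Set M).Definable L A →
      r.rk A = (k : WithBot ℕ) → ∃ d, ¬ Splits r k d A)
    (hspl : ∀ {n k : ℕ} (A : Set (Fin n → M)), (univ : Set M).Definable L A →
      r.rk A = ((k + 1 : ℕ) : WithBot ℕ) →
      ∃ P ⊆ A, (univ : Set M).Definable L P ∧ r.rk P = (k : WithBot ℕ)) : r.Axiom1 := by
  intro k A hA n
  constructor
  · intro hn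
    -- Repeated splitting yields a subset of rank exactly `n + 1`; infinitely many disjoint pieces
    -- of rank `n` can be removed from it without lowering its rank.
    have hdown : ∀ (j : ℕ) (B : Set (Fin k → M)), (univ : Set M).Definable L B →
        r.rk B = ((n + 1 + j : ℕ) : WithBot ℕ) →
        ∃ B' ⊆ B, (univ : Set M).Definable L B' ∧ r.rk B' = ((n + 1 : ℕ) : WithBot ℕ) := by
      intro j
      induction j with
      | zero => exact fun B hB hBk => ⟨B, subset_rfl, hB, hBk⟩
      | succ j ih =>
        intro B hB hBk
        obtain ⟨P, hPB, hP, hPk⟩ := hspl B hB hBk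
        obtain ⟨B', hB'P, hB'⟩ := ih P hP hPk
        exact ⟨B', hB'P.trans hPB, hB'⟩
    obtain ⟨l, hl⟩ := exists_rk_eq (r := r) hA (nonempty_of_le_rk hn)
    have hnl : n + 1 ≤ l := by rw [hl] at hn; exact_mod_cast hn
    obtain ⟨j, rfl⟩ := Nat.exists_eq_add_of_le hnl
    obtain ⟨A', hA'A, hA', hA'k⟩ := hdown j A hA hl
    obtain ⟨P, hP, hPA, hPd⟩ := exists_disjoint_sequence
      (fun B : Set (Fin k → M) => (univ : Set M).Definable L B ∧
        r.rk B = ((n + 1 : ℕ) : WithBot ℕ))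
      (fun B => (univ : Set M).Definable L B ∧ r.rk B = (n : WithBot ℕ)) (by
        rintro B ⟨hB, hBk⟩
        obtain ⟨P, hPB, hP, hPk⟩ := hspl B hB hBk
        refine ⟨P, hPB, ⟨hP, hPk⟩, hB.sdiff hP, ?_⟩
        have h := h11 P (B \ P) hP (hB.sdiff hP)
        rw [union_sdiff_cancel hPB, hBk, hPk] at h
        rcases max_choice (n : WithBot ℕ) (r.rk (B \ P)) with h' | h'
        · rw [h'] at h
          have : n + 1 = n := by exact_mod_cast h
          omega
        · rw [h'] at h
          exact h.symm) ⟨hA', hA'k⟩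
    exact ⟨P, fun i => (hP i).1, fun i => nonempty_of_le_rk (hP i).2.ge,
      fun i => (hPA i).trans hA'A, hPd, fun i => (hP i).2.ge⟩
  · rintro ⟨P, hP, hPne, hPA, hPd, hPk⟩
    by_contra hcon
    have hmono : ∀ i, r.rk (P i) ≤ r.rk A := fun i => rk_mono h11 (hP i) hA (hPA i)
    have hAn : r.rk A = (n : WithBot ℕ) :=
      eq_of_le_of_not_succ_le ((hPk 0).trans (hmono 0)) hcon
    obtain ⟨d, hd⟩ := hdeg A hA hAn
    refine hd (splits_of_disjoint d A (fun i => P i) (fun i => hP i) (fun i => hPA i) ?_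
      (fun i => le_antisymm ((hmono i).trans hAn.le) (hPk i)))
    intro i j hij
    exact hPd fun h => hij (Fin.ext h)

theorem Splits.mono {n k : ℕ} : ∀ (d : ℕ) {A B : Set (Fin n → M)},
    (univ : Set M).Definable L A → A ⊆ B → Splits r k d A → Splits r k d B := by
  intro d
  induction d with
  | zero => intros; trivial
  | succ d ih =>
    rintro A B hA hAB ⟨P, hP, hPk, hs⟩
    refine ⟨A ∩ P, hA.inter hP, ?_, ih (hA.sdiff hP) ?_ hs⟩
    · rwa [inter_eq_self_of_subset_right (inter_subset_left.trans hAB)]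
    · exact fun x hx => ⟨hAB hx.1, fun h => hx.2 h.2⟩

/-- If `A` splits into `d₁ + d₂` pieces, then `A ∩ P` splits into `d₁` or `A \ P` into `d₂`,
since each piece of `A` keeps its rank on at least one side of `P`. -/
theorem Splits.inter_or_sdiff (h11 : r.Axiom1_1) {n k : ℕ} : ∀ (d d₁ d₂ : ℕ), d = d₁ + d₂ →
    ∀ (A P : Set (Fin n → M)), (univ : Set M).Definable L A → (univ : Set M).Definable L P →
      Splits r k d A → Splits r k d₁ (A ∩ P) ∨ Splits r k d₂ (A \ P) := by
  intro d
  induction d with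
  | zero =>
    intro d₁ d₂ h A P _ _ _
    obtain rfl : d₁ = 0 := by omega
    exact Or.inl trivial
  | succ d ih =>
    rintro d₁ d₂ h A P hA hP ⟨Q, hQ, hQk, hs⟩
    cases d₁ with
    | zero => exact Or.inl trivial
    | succ e₁ =>
    cases d₂ with
    | zero => exact Or.inr trivial
    | succ e₂ =>
    have hAQ := hA.inter hQ
    have hmax := h11 _ _ (hAQ.inter hP) (hAQ.sdiff hP)
    rw [inter_union_sdiff, hQk] at hmax
    have e1 : A ∩ Q ∩ P = A ∩ P ∩ Q := inter_right_comm _ _ _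
    have e2 : (A ∩ Q) \ P = (A \ P) ∩ Q := by ext; simp only [mem_inter_iff, mem_sdiff]; tauto
    have e3 : (A \ Q) ∩ P = (A ∩ P) \ Q := by ext; simp only [mem_inter_iff, mem_sdiff]; tauto
    have e4 : (A \ Q) \ P = (A \ P) \ Q := by ext; simp only [mem_sdiff]; tauto
    rcases max_choice (r.rk (A ∩ Q ∩ P)) (r.rk ((A ∩ Q) \ P)) with h' | h' <;> rw [h'] at hmax
    · rw [e1] at hmax
      rcases ih e₁ (e₂ + 1) (by omega) (A \ Q) P (hA.sdiff hQ) hP hs with h'' | h''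
      · rw [e3] at h''
        exact Or.inl ⟨Q, hQ, hmax.symm, h''⟩
      · rw [e4] at h''
        exact Or.inr (h''.mono _ ((hA.sdiff hP).sdiff hQ) sdiff_subset)
    · rw [e2] at hmax
      rcases ih (e₁ + 1) e₂ (by omega) (A \ Q) P (hA.sdiff hQ) hP hs with h'' | h''
      · rw [e3] at h''
        exact Or.inl (h''.mono _ ((hA.inter hP).sdiff hQ) sdiff_subset)
      · rw [e4] at h''
        exact Or.inr ⟨Q, hQ, hmax.symm, h''⟩

theorem rk_mono_of_monotonicity (h1 : r.Axiom1) {n : ℕ} {A B : Set (Fin n → M)}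
    (hA : (univ : Set M).Definable L A) (hB : (univ : Set M).Definable L B) (hAB : A ⊆ B) :
    r.rk A ≤ r.rk B := by
  apply rk_le_of_forall
  intro k hk
  cases k with
  | zero => exact zero_le_rk hB ((nonempty_of_le_rk hk).mono hAB)
  | succ k =>
    obtain ⟨P, hP, hPne, hPA, hPd, hPk⟩ := (h1 A hA k).1 hk
    exact (h1 B hB k).2 ⟨P, hP, hPne, fun i => (hPA i).trans hAB, hPd, hPk⟩

/-- Induction on `k`: of infinitely many disjoint pieces of `A ∪ B` of rank at least `k`,
infinitely many keep rank at least `k` on `A`, or on `B`. -/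
theorem le_rk_union (h1 : r.Axiom1) {n : ℕ} : ∀ (k : ℕ) (A B : Set (Fin n → M)),
    (univ : Set M).Definable L A → (univ : Set M).Definable L B →
    (k : WithBot ℕ) ≤ r.rk (A ∪ B) → (k : WithBot ℕ) ≤ r.rk A ∨ (k : WithBot ℕ) ≤ r.rk B := by
  intro k
  induction k with
  | zero =>
    intro A B hA hB h
    rcases union_nonempty.1 (nonempty_of_le_rk h) with h | h
    · exact Or.inl (zero_le_rk hA h)
    · exact Or.inr (zero_le_rk hB h)
  | succ k ih =>
    intro A B hA hB h
    obtain ⟨P, hP, hPne, hPA, hPd, hPk⟩ := (h1 _ (hA.union hB) k).1 h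
    have hsub : ∀ X : Set (Fin n → M), (univ : Set M).Definable L X →
        {i | (k : WithBot ℕ) ≤ r.rk (P i ∩ X)}.Infinite →
        ((k + 1 : ℕ) : WithBot ℕ) ≤ r.rk X := by
      intro X hX hinf
      let g := hinf.natEmbedding
      refine (h1 X hX k).2 ⟨fun i => P (g i) ∩ X, fun i => (hP _).inter hX,
        fun i => nonempty_of_le_rk (g i).2, fun i => inter_subset_right, fun i j hij => ?_,
        fun i => (g i).2⟩
      exact (hPd fun h => hij (g.injective (Subtype.ext h))).mono inter_subset_left
        inter_subset_left
    by_contra hcon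
    rw [not_or] at hcon
    have hfA := not_infinite.1 fun h => hcon.1 (hsub A hA h)
    have hfB := not_infinite.1 fun h => hcon.2 (hsub B hB h)
    refine infinite_univ ((hfA.union hfB).subset fun i _ => ?_)
    apply ih _ _ ((hP i).inter hA) ((hP i).inter hB)
    rw [← inter_union_distrib_left, inter_eq_self_of_subset_left (hPA i)]
    exact hPk i

theorem weakMonotonicity_of_monotonicity (h1 : r.Axiom1) : r.Axiom1_1 := by
  intro n A B hA hB
  apply le_antisymm
  · rw [le_max_iff]
    by_cases hbot : r.rk (A ∪ B) = ⊥
    · rw [hbot]; exact Or.inl bot_le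
    · obtain ⟨k, hk⟩ := WithBot.ne_bot_iff_exists.1 hbot
      rw [← hk]
      exact le_rk_union h1 k A B hA hB hk.le
  · exact max_le (rk_mono_of_monotonicity h1 hA (hA.union hB) subset_union_left)
      (rk_mono_of_monotonicity h1 hB (hA.union hB) subset_union_right)

/-- Under Axiom 1 every definable set has finite degree: a set of infinite degree could be cut
again and again, one half always having infinite degree and the other full rank, giving
infinitely many disjoint subsets of full rank. -/
theorem exists_not_splits_of_monotonicity (h1 : r.Axiom1) {n k : ℕ} {A : Set (Fin n → M)}
    (hA : (univ : Set M).Definable L A) (hk : r.rk A = (k : WithBot ℕ)) :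
    ∃ d, ¬ Splits r k d A := by
  have h11 : r.Axiom1_1 := weakMonotonicity_of_monotonicity h1
  by_contra! hcon
  obtain ⟨P, hP, hPA, hPd⟩ := exists_disjoint_sequence
    (fun B : Set (Fin n → M) => (univ : Set M).Definable L B ∧ ∀ d, Splits r k d B)
    (fun P => (univ : Set M).Definable L P ∧ (k : WithBot ℕ) ≤ r.rk P) (by
      rintro B ⟨hB, hBs⟩
      obtain ⟨P, hP, hPk, Q, hQ, hQk, -⟩ := hBs 2
      have hle : (k : WithBot ℕ) ≤ r.rk (B \ P) :=
        hQk.ge.trans (rk_mono h11 ((hB.sdiff hP).inter hQ) (hB.sdiff hP) inter_subset_left)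
      by_cases hs : ∀ d, Splits r k d (B \ P)
      · refine ⟨B ∩ P, inter_subset_left, ⟨hB.inter hP, hPk.ge⟩, ?_⟩
        rw [sdiff_self_inter]
        exact ⟨hB.sdiff hP, hs⟩
      · obtain ⟨d, hd⟩ := not_forall.1 hs
        refine ⟨B \ P, sdiff_subset, ⟨hB.sdiff hP, hle⟩, ?_⟩
        rw [sdiff_sdiff_right_self]
        exact ⟨hB.inter hP, fun d' => ((hBs (d' + d)).inter_or_sdiff h11 _ _ _ rfl B P hB
          hP).resolve_right hd⟩) ⟨hA, hcon⟩
  have h := (h1 A hA k).2 ⟨P, fun i => (hP i).1, fun i => nonempty_of_le_rk (hP i).2, hPA, hPd,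
    fun i => (hP i).2⟩
  rw [hk] at h
  have : k + 1 ≤ k := by exact_mod_cast h
  omega

theorem IsBPRank.isBP0Rank (hr : r.IsBPRank) : r.IsBP0Rank univ := by
  obtain ⟨h1, h2, h3, h4⟩ := hr
  have h11 : r.Axiom1_1 := weakMonotonicity_of_monotonicity h1
  refine ⟨h11, ?_, ?_, h2, h3, h4⟩
  · rintro n m B - ⟨b, hb⟩ φ
    refine ⟨b, hb, ?_⟩
    have hdef : (univ : Set M).Definable L (fiber φ b) := definable_fiber φ fun _ => mem_univ _
    have key : ∃ D, (∃ d, r.IsRankPartition (fiber φ b) d) ∧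
        ∀ d, r.IsRankPartition (fiber φ b) d → d ≤ D := by
      rcases (fiber φ b).eq_empty_or_nonempty with he | hne
      · rw [he]
        refine ⟨0, ⟨0, Fin.elim0, fun i => i.elim0, fun i => i.elim0, fun i => i.elim0,
          fun i => i.elim0, by simp⟩, ?_⟩
        rintro d ⟨P, -, hPne, -, -, hPU⟩
        by_contra hd
        have hx := (hPne ⟨0, by omega⟩).mono (subset_iUnion P _)
        rw [hPU] at hx
        exact not_nonempty_empty hx
      · obtain ⟨k, hk⟩ := exists_rk_eq (r := r) hdef hne
        obtain ⟨D, hD⟩ := exists_not_splits_of_monotonicity h1 hdef hk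
        refine ⟨D, ⟨1, fun _ => fiber φ b, fun _ => hdef, fun _ => hne, fun _ => rfl,
          fun i j hij => (hij (Subsingleton.elim i j)).elim, iUnion_const _⟩, ?_⟩
        rintro d ⟨P, hP, -, hPk, hPd, hPU⟩
        by_contra hd
        have hDd : D ≤ d := by omega
        refine hD (splits_of_disjoint D _ (fun i => P (Fin.castLE hDd i)) (fun i => hP _)
          (fun i => hPU ▸ subset_iUnion P _) (fun i j hij => hPd ?_)
          (fun i => (hPk _).trans hk))
        exact fun h => hij (Fin.castLE_injective hDd h)
    obtain ⟨D, hex, hD⟩ := key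
    have hfin : {d | r.IsRankPartition (fiber φ b) d}.Finite :=
      (finite_Iic D).subset fun d hd => hD d hd
    obtain ⟨d, hd, hdmax⟩ := hfin.exists_maximalFor id _ hex
    refine ⟨d, hd, fun d' hd' => ?_⟩
    by_contra hlt
    exact hlt (hdmax hd' (le_of_not_ge hlt))
  · rintro n m B - ⟨b, hb⟩ φ hinf
    have hdef : (univ : Set M).Definable L (fiber φ b) := definable_fiber φ fun _ => mem_univ _
    obtain ⟨k, hk⟩ := exists_rk_eq (r := r) hdef (hinf b hb).nonempty
    have h1k : ((0 + 1 : ℕ) : WithBot ℕ) ≤ r.rk (fiber φ b) := by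
      let g := (hinf b hb).natEmbedding
      have hd : ∀ i, (univ : Set M).Definable L ({(g i : Fin n → M)} : Set (Fin n → M)) :=
        fun i => definable_singleton fun _ => mem_univ _
      refine (h1 _ hdef 0).2 ⟨fun i => {(g i : Fin n → M)}, hd, fun i => singleton_nonempty _,
        fun i => singleton_subset_iff.2 (g i).2, fun i j hij => ?_,
        fun i => zero_le_rk (hd i) (singleton_nonempty _)⟩
      exact disjoint_singleton.2 fun h => hij (g.injective (Subtype.ext h))
    have hk1 : 1 ≤ k := by rw [hk] at h1k; exact_mod_cast h1k
    obtain ⟨j, rfl⟩ := Nat.exists_eq_add_of_le' hk1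
    obtain ⟨P, hP, hPne, hPA, hPd, hPk⟩ := (h1 _ hdef j).1 hk.ge
    have hex : ∃ i, ¬ ((j + 1 : ℕ) : WithBot ℕ) ≤ r.rk (P i) := by
      by_contra! hall
      have h := (h1 _ hdef (j + 1)).2 ⟨P, hP, hPne, hPA, hPd, hall⟩
      rw [hk] at h
      have : j + 1 + 1 ≤ j + 1 := by exact_mod_cast h
      omega
    obtain ⟨i, hi⟩ := hex
    refine ⟨b, hb, P i, hP i, hPA i, ?_⟩
    rw [eq_of_le_of_not_succ_le (hPk i) hi, hk]
    norm_cast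

end AxiomOne

/-! ### Restricting a rank to an elementary substructure -/

section Restriction

variable {S : L.ElementarySubstructure M}

/-- The `S`-points of a subset of a power of `M`. -/
def trace (S : L.ElementarySubstructure M) {α : Type*} (D : Set (α → M)) : Set (α → S) :=
  {y | (fun i => (y i : M)) ∈ D}

theorem realize_coe {α : Type*} (φ : L.Formula α) (y : α → S) :
    (φ.Realize fun i => (y i : M)) ↔ φ.Realize y :=
  S.subtype.map_formula φ y

theorem realize_coe_sumElim {α β : Type*} (φ : L.Formula (α ⊕ β)) (y : α → S) (b : β → S) :
    φ.Realize (Sum.elim (fun i => (y i : M)) fun i => (b i : M)) ↔ φ.Realize (Sum.elim y b) := by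
  rw [← realize_coe]
  apply iff_of_eq
  congr 1
  funext i
  rcases i with i | i <;> rfl

theorem trace_fiber {n m : ℕ} (φ : L.Formula (Fin n ⊕ Fin m)) (b : Fin m → S) :
    trace S (fiber φ fun i => (b i : M)) = fiber φ b :=
  Set.ext fun y => realize_coe_sumElim φ y b

theorem exists_point {α : Type*} [Finite α] {D : Set (α → M)} (hD : (S : Set M).Definable L D)
    (hne : D.Nonempty) : (trace S D).Nonempty := by
  obtain ⟨m, φ, b, hb, rfl⟩ := exists_family hD
  obtain ⟨x, hx⟩ := hne
  lift b to Fin m → S using hb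
  have h1 : ((φ.relabel Sum.swap).iExs α : L.Formula (Fin m)).Realize fun i => (b i : M) := by
    rw [Formula.realize_iExs]
    refine ⟨x, ?_⟩
    rw [Formula.realize_relabel]
    rw [mem_ofPred_eq] at hx
    convert hx using 2
    funext i
    rcases i with i | i <;> rfl
  rw [realize_coe, Formula.realize_iExs] at h1
  obtain ⟨y, hy⟩ := h1
  refine ⟨y, (realize_coe_sumElim φ y b).2 ?_⟩
  rw [Formula.realize_relabel] at hy
  convert hy using 2
  funext i
  rcases i with i | i <;> rfl

/-- An `S`-definable set is determined by its `S`-points. -/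
theorem subset_of_trace_subset {α : Type*} [Finite α] {D E : Set (α → M)}
    (hD : (S : Set M).Definable L D) (hE : (S : Set M).Definable L E)
    (h : trace S D ⊆ trace S E) : D ⊆ E := by
  intro x hx
  by_contra hxE
  obtain ⟨y, hy⟩ := exists_point (hD.sdiff hE) ⟨x, hx, hxE⟩
  exact hy.2 (h hy.1)

theorem trace_definable {α : Type*} {D : Set (α → M)} (hD : (S : Set M).Definable L D) :
    (univ : Set S).Definable L (trace S D) := by
  obtain ⟨m, φ, b, hb, rfl⟩ := exists_family hD
  lift b to Fin m → S using hb
  convert definable_slice (definable_formula (M := S) φ) (b := b) (fun _ => mem_univ _) using 1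
  exact Set.ext fun y => realize_coe_sumElim φ y b

theorem exists_trace_eq {α : Type*} {A : Set (α → S)} (hA : (univ : Set S).Definable L A) :
    ∃ D : Set (α → M), (S : Set M).Definable L D ∧ trace S D = A := by
  obtain ⟨m, φ, b, -, rfl⟩ := exists_family hA
  exact ⟨_, definable_slice (definable_formula φ) (b := fun i => (b i : M)) fun i => (b i).2,
    Set.ext fun y => realize_coe_sumElim φ y b⟩

open Classical in
/-- The `S`-definable subset of a power of `M` with set of `S`-points `A`, which exists exactly
when `A` is definable in `S`; for other `A` the value is `∅`. -/
noncomputable def extend (S : L.ElementarySubstructure M) {n : ℕ} (A : Set (Fin n → S)) :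
    Set (Fin n → M) :=
  if h : ∃ D : Set (Fin n → M), (S : Set M).Definable L D ∧ trace S D = A then h.choose else ∅

theorem extend_trace {n : ℕ} {D : Set (Fin n → M)} (hD : (S : Set M).Definable L D) :
    extend S (trace S D) = D := by
  have h : ∃ E : Set (Fin n → M), (S : Set M).Definable L E ∧ trace S E = trace S D :=
    ⟨D, hD, rfl⟩
  rw [extend, dif_pos h]
  exact (subset_of_trace_subset h.choose_spec.1 hD h.choose_spec.2.subset).antisymm
    (subset_of_trace_subset hD h.choose_spec.1 h.choose_spec.2.superset)

/-- The rank on `S` giving a set definable in `S` the rank of the set in `M` defined by the same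
formula. -/
noncomputable def restrictRank (r : RankFunction L M) (S : L.ElementarySubstructure M) :
    RankFunction L S where
  rk A := r.rk (extend S A)
  rk_empty n := by
    rw [← r.rk_empty n]
    congr 1
    exact extend_trace (D := (∅ : Set (Fin n → M))) definable_empty
  rk_ne_bot A hA hne := by
    obtain ⟨D, hD, rfl⟩ := exists_trace_eq hA
    rw [extend_trace hD]
    obtain ⟨y, hy⟩ := hne
    exact r.rk_ne_bot D (hD.mono (subset_univ _)) ⟨_, hy⟩

variable {r : RankFunction L M} {C : Set M}

theorem restrictRank_trace {n : ℕ} {D : Set (Fin n → M)} (hD : (S : Set M).Definable L D) :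
    (restrictRank r S).rk (trace S D) = r.rk D :=
  congrArg r.rk (extend_trace hD)

theorem restrictRank_weakMonotonicity (h11 : r.Axiom1_1) : (restrictRank r S).Axiom1_1 := by
  intro n A B hA hB
  obtain ⟨D, hD, rfl⟩ := exists_trace_eq hA
  obtain ⟨E, hE, rfl⟩ := exists_trace_eq hB
  rw [restrictRank_trace hD, restrictRank_trace hE,
    ← h11 D E (hD.mono (subset_univ _)) (hE.mono (subset_univ _))]
  exact restrictRank_trace (hD.union hE)

theorem Splits.of_restrictRank {n k : ℕ} : ∀ (d : ℕ) (D : Set (Fin n → M)),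
    (S : Set M).Definable L D → Splits (restrictRank r S) k d (trace S D) → Splits r k d D := by
  intro d
  induction d with
  | zero => intros; trivial
  | succ d ih =>
    rintro D hD ⟨P, hP, hPk, hs⟩
    obtain ⟨E, hE, rfl⟩ := exists_trace_eq hP
    refine ⟨E, hE.mono (subset_univ _), ?_, ih _ (hD.sdiff hE) hs⟩
    rw [← hPk]
    exact (restrictRank_trace (hD.inter hE)).symm

/-- Over an atomic `S` the approximation properties are exact, which yields Axiom 1. -/
theorem restrictRank_monotonicity (h11 : r.Axiom1_1) (hdeg : r.DegreeApprox C)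
    (hspl : r.SplittingApprox C) (h2 : r.Axiom2 C) (h3 : r.Axiom3) (hCS : C ⊆ (S : Set M))
    (hS : IsAtomicOver L C (S : Set M)) : (restrictRank r S).Axiom1 := by
  apply monotonicity_of_not_splits (restrictRank_weakMonotonicity h11)
  · intro n k A hA hk
    obtain ⟨D, hD, rfl⟩ := exists_trace_eq hA
    rw [restrictRank_trace hD] at hk
    obtain ⟨d, hd⟩ := hS.exists_not_splits h11 hdeg h2 hD hk
    exact ⟨d, fun h => hd (Splits.of_restrictRank d D hD h)⟩
  · intro n k A hA hk
    obtain ⟨D, hD, rfl⟩ := exists_trace_eq hA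
    rw [restrictRank_trace hD] at hk
    obtain ⟨m, φ, a, ha, rfl⟩ := exists_family hD
    obtain ⟨p, ψ, e, he⟩ := (hS m a ha).exists_rk_pred h11 hspl h2 h3 φ hk
    -- The parameters `e` may be moved into `S` since the rank condition is `S`-definable.
    obtain ⟨e', he'⟩ := exists_point (definable_rk_eq h2 hCS
      ((hD.preimage_comp (Sum.inl : Fin n → Fin n ⊕ Fin p)).inter (definable_formula ψ)) k)
      ⟨e, he⟩
    have hE := hD.inter (definable_fiber ψ (b := fun i => (e' i : M)) fun i => (e' i).2)
    refine ⟨trace S _, fun y hy => hy.1, trace_definable hE, ?_⟩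
    rw [restrictRank_trace hE]
    exact he'

theorem restrictRank_definability (h2 : r.Axiom2 C) (hCS : C ⊆ (S : Set M)) :
    (restrictRank r S).Axiom2 univ := by
  intro n m φ k
  convert trace_definable ((h2 φ k).mono hCS) using 1
  ext b
  have h := restrictRank_trace (r := r)
    (definable_fiber φ (b := fun i => (b i : M)) fun i => (b i).2)
  rw [trace_fiber] at h
  rw [mem_ofPred_eq, h]
  rfl

/-- A finite member of a family in `S` gains no new points in `M`. -/
theorem restrictRank_elimination (h4 : r.Axiom4) : (restrictRank r S).Axiom4 := by
  intro n m φ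
  obtain ⟨m₀, hm₀⟩ := h4 φ
  refine ⟨m₀, fun b h => ?_⟩
  let c : (Fin n → S) → (Fin n → M) := fun y i => y i
  have hc : Function.Injective c := fun y z hyz =>
    funext fun i => Subtype.ext (congrFun hyz i)
  have hfin : (S : Set M).Definable L (c '' fiber φ b) := by
    have := h.to_subtype
    rw [image_eq_iUnion, biUnion_eq_iUnion]
    exact definable_iUnion_of_finite fun y => definable_singleton fun i => (y.1 i).2
  have heq : fiber φ (fun i => (b i : M)) = c '' fiber φ b := by
    apply (subset_of_trace_subset (definable_fiber φ fun i => (b i).2) hfin ?_).antisymm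
    · rintro _ ⟨y, hy, rfl⟩
      rwa [← trace_fiber] at hy
    · rw [trace_fiber]
      exact fun y hy => ⟨y, hy, rfl⟩
  have h' : (fiber φ fun i => (b i : M)).Finite := heq ▸ h.image c
  have := hm₀ _ h'
  rwa [← ncard_eq_toFinset_card _ h', heq, ncard_image_of_injective _ hc,
    ncard_eq_toFinset_card _ h] at this

theorem definable_comp_eq {α β : Type*} [Finite β] {A : Set M} (g g' : β → α) :
    A.Definable L {z : α → M | z ∘ g = z ∘ g'} := by
  have h := definable_iInter_of_finite (A := A) (fun i : β => definable_formula (M := M)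
    (((Term.var (g i) : L.Term α).equal (Term.var (g' i)))))
  convert h using 1
  ext x
  simp [funext_iff]

/-- The graph of a definable surjection in `S` extends to a graph `G` of a surjection in `M`, and
the condition on the ranks of its fibers extends as well, by definability of rank. -/
theorem restrictRank_additivity [Nonempty M] (h2 : r.Axiom2 C) (h3 : r.Axiom3) (hCS : C ⊆ (S : Set M)) :
    (restrictRank r S).Axiom3 := by
  intro k l A B f hA hB hG hmaps hsurj n hn
  obtain ⟨D, hD, rfl⟩ := exists_trace_eq hA
  obtain ⟨E, hE, rfl⟩ := exists_trace_eq hB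
  obtain ⟨G, hGd, hG⟩ := exists_trace_eq hG
  have hmem : ∀ (y : Fin k → S) (z : Fin l → S),
      Sum.elim (fun i => (y i : M)) (fun i => (z i : M)) ∈ G ↔ y ∈ trace S D ∧ f y = z := by
    intro y z
    have h := Set.ext_iff.1 hG (Sum.elim y z)
    simp only [mem_ofPred_eq, Sum.elim_comp_inl, Sum.elim_comp_inr] at h
    rw [← h]
    apply iff_of_eq
    congr 1
    funext i
    rcases i with i | i <;> rfl
  have hdom : ∀ x y, Sum.elim x y ∈ G → x ∈ D := by
    intro x y h
    refine subset_of_trace_subset hGd (hD.preimage_comp Sum.inl) ?_ h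
    rw [hG]
    exact fun z hz => hz.1
  have hcod : ∀ x y, Sum.elim x y ∈ G → y ∈ E := by
    intro x y h
    refine subset_of_trace_subset hGd (hE.preimage_comp Sum.inr) ?_ h
    rw [hG]
    rintro z ⟨hz, hz'⟩
    have := hmaps hz
    rw [hz'] at this
    exact this
  have htot : ∀ x ∈ D, ∃ y, Sum.elim x y ∈ G := by
    refine subset_of_trace_subset hD hGd.exists_of_finite fun y hy => ?_
    exact ⟨_, (hmem y (f y)).2 ⟨hy, rfl⟩⟩
  have hswap : (S : Set M).Definable L {z : Fin l ⊕ Fin k → M |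
      Sum.elim (z ∘ Sum.inr) (z ∘ Sum.inl) ∈ G} := by
    convert hGd.preimage_comp (Sum.swap : Fin k ⊕ Fin l → Fin l ⊕ Fin k) using 1
    ext z
    rw [mem_ofPred_eq, mem_preimage]
    apply iff_of_eq
    congr 1
    funext i
    rcases i with i | i <;> rfl
  have hsurj' : ∀ y ∈ E, ∃ x, Sum.elim x y ∈ G := by
    refine subset_of_trace_subset hE hswap.exists_of_finite fun z hz => ?_
    obtain ⟨y, hy, hyz⟩ := hsurj hz
    exact ⟨_, (hmem y z).2 ⟨hy, hyz⟩⟩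
  have hfun : ∀ x y y', Sum.elim x y ∈ G → Sum.elim x y' ∈ G → y = y' := by
    intro x y y' h h'
    have hd := ((hGd.preimage_comp (Sum.elim Sum.inl (Sum.inr ∘ Sum.inl) :
        Fin k ⊕ Fin l → Fin k ⊕ (Fin l ⊕ Fin l))).inter
      (hGd.preimage_comp (Sum.elim Sum.inl (Sum.inr ∘ Sum.inr) :
        Fin k ⊕ Fin l → Fin k ⊕ (Fin l ⊕ Fin l))))
    have := subset_of_trace_subset hd (definable_comp_eq (β := Fin l) (Sum.inr ∘ Sum.inl)
      (Sum.inr ∘ Sum.inr)) ?_ (a := Sum.elim x (Sum.elim y y')) ?_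
    · exact this
    · rintro z ⟨hz, hz'⟩
      simp only [mem_preimage, Sum.comp_elim] at hz hz'
      have e1 := ((hmem (fun i => z (Sum.inl i)) (fun i => z (Sum.inr (Sum.inl i)))).1 hz).2
      have e2 := ((hmem (fun i => z (Sum.inl i)) (fun i => z (Sum.inr (Sum.inr i)))).1 hz').2
      funext i
      exact congrArg Subtype.val (congrFun (e1.symm.trans e2) i)
    · simpa only [mem_inter_iff, mem_preimage, Sum.comp_elim, ← Function.comp_assoc,
        Sum.elim_comp_inl, Sum.elim_comp_inr] using ⟨h, h'⟩
  have hrk : ∀ y ∈ E, r.rk {x | Sum.elim x y ∈ G} = (n : WithBot ℕ) := by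
    refine subset_of_trace_subset hE (definable_rk_eq h2 hCS hGd n) fun z hz => ?_
    have hd := definable_slice hGd (b := fun i => (z i : M)) fun i => (z i).2
    have h := hn z hz
    change r.rk {x | Sum.elim x (fun i => (z i : M)) ∈ G} = (n : WithBot ℕ)
    rw [← restrictRank_trace (r := r) hd, ← h]
    congr 1
    ext y
    exact hmem y z
  classical
  choose! F hF using htot
  have hFiff : ∀ x y, (x ∈ D ∧ F x = y) ↔ Sum.elim x y ∈ G := by
    intro x y
    constructor
    · rintro ⟨hx, rfl⟩
      exact hF x hx
    · exact fun h => ⟨hdom _ _ h, hfun _ _ _ (hF x (hdom _ _ h)) h⟩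
  rw [restrictRank_trace hD, restrictRank_trace hE]
  refine h3 D E F (hD.mono (subset_univ _)) (hE.mono (subset_univ _)) ?_ ?_ ?_ n ?_
  · convert hGd.mono (subset_univ _) using 1
    ext z
    rw [mem_ofPred_eq, hFiff, Sum.elim_comp_inl_inr]
  · exact fun x hx => hcod _ _ (hF x hx)
  · intro y hy
    obtain ⟨x, hx⟩ := hsurj' y hy
    exact ⟨x, (hFiff x y).2 hx⟩
  · intro y hy
    rw [← hrk y hy]
    congr 1
    ext x
    exact hFiff x y

end Restriction

/-- A complete theory `T` in a countable language has a model carrying a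
BP-rank if and only if it has a model carrying a BP₀-rank relative to some set of
parameters. -/
theorem hasBPRank_iff_hasBP0Rank (L : FirstOrder.Language.{0, 0}) [Countable L.Symbols]
    (T : L.Theory) (hT : T.IsComplete) :
    (∃ (M : Theory.ModelType.{0, 0, 0} T) (r : RankFunction L M), r.IsBPRank) ↔
    ∃ (M : Theory.ModelType.{0, 0, 0} T) (r : RankFunction L M) (C : Set M),
      r.IsBP0Rank C := by
  constructor
  · rintro ⟨M, r, hr⟩
    exact ⟨M, r, univ, IsBPRank.isBP0Rank hr⟩
  · rintro ⟨M, r, C, h11, hdeg, hspl, h2, h3, h4⟩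
    obtain ⟨S, hCS, hS⟩ := exists_atomic_elementarySubstructure h11 hdeg h2
    exact ⟨Theory.ModelType.of T S, restrictRank r S,
      restrictRank_monotonicity h11 hdeg hspl h2 h3 hCS hS, restrictRank_definability h2 hCS,
      restrictRank_additivity h2 h3 hCS, restrictRank_elimination (r := r) h4⟩

end BP
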